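/- arXiv:2508.10823 — 2 statements merged into one kernel-verified Lean document; each statement's English description precedes it below -/
import Mathlib

section
/- Let V be a closed isometric operator in a separable complex Hilbert space H, and let G_1, G_2 be minimal unitary extensions of V acting in Hilbert spaces ℋ_1 ⊇ H and ℋ_2 ⊇ H respectively (i.e., unitary extensions of V for which the closed linear span of ⋃_{k∈ℤ} G_j^k H equals ℋ_j). If G_1 and G_2 produce the same generalized resolvent of V, i.e., P^{ℋ_1}_H (E_{ℋ_1} − z G_1)^{−1}|_H = P^{ℋ_2}_H (E_{ℋ_2} − z G_2)^{−1}|_H for all z ∈ ℂ with |z| ≠ 1, then G_1 and G_2 are unitarily equivalent: there exists a unitary operator K mapping ℋ_1 onto ℋ_2 such that G_2 = K G_1 K^{−1} and K h = h for all h ∈ H. -/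
/-!
The compressed resolvent determines the extension up to unitary equivalence because it determines
all inner products between the translates `Gᵏ x`, `k ∈ ℤ`, `x ∈ H`. Indeed, near `z = 0` the
function `⟪y, (E - z G)⁻¹ x⟫` has the Neumann expansion `∑ zⁿ ⟪y, Gⁿ x⟫`
(`hasFPowerSeriesAt_resolvent`), so equal compressed resolvents have equal moments
`⟪y, Gⁿ x⟫` for `n ≥ 0`. Unitarity of `G` turns this into equality of the full Gram matrices
`⟪Gʲ y, Gᵏ x⟫ = ⟪y, Gᵏ⁻ʲ x⟫` (`gram_eq`, using conjugate symmetry when `k < j`).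

Consequently `∑ aᵢ G₁^{kᵢ} xᵢ ↦ ∑ aᵢ G₂^{kᵢ} xᵢ` preserves norms. By minimality such sums are dense
in both spaces, so the correspondence extends to a unitary operator. It fixes `H` (take `k = 0`) and
intertwines `G₁` with `G₂`, since both act as the shift `k ↦ k + 1` on the translates
(`translates_shift`).
-/

noncomputable section

open Complex Filter Topology Submodule Metric
open scoped InnerProductSpace ComplexOrder

/-- A closed isometric operator in a complex Hilbert space `H`: a linear isometry
defined on a closed subspace `dom` of `H`. -/
structure ClosedIsometry (H : Type*) [NormedAddCommGroup H] [InnerProductSpace ℂ H]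
    [CompleteSpace H] where
  dom : Submodule ℂ H
  dom_closed : IsClosed (dom : Set H)
  map : ↥dom →ₗᵢ[ℂ] H

namespace ClosedIsometry

variable {H : Type*} [NormedAddCommGroup H] [InnerProductSpace ℂ H] [CompleteSpace H]

/-- The defect subspace `N₀(V) = H ⊖ D(V)`. -/
def N0 (V : ClosedIsometry H) : Submodule ℂ H := V.domᗮ

/-- The defect subspace `N_∞(V) = H ⊖ R(V)`. -/
def Ninf (V : ClosedIsometry H) : Submodule ℂ H := (LinearMap.range V.map.toLinearMap)ᗮ

/-- `V` has no nonzero fixed elements. -/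
def NoFixed (V : ClosedIsometry H) : Prop := ∀ x : V.dom, V.map x = (x : H) → (x : H) = 0

instance (V : ClosedIsometry H) : CompleteSpace V.dom := V.dom_closed.completeSpace_coe

instance (V : ClosedIsometry H) : HasOrthogonalProjection V.N0 :=
  inferInstanceAs (HasOrthogonalProjection V.domᗮ)

/-- The operator `V ⊕ F` on the whole of `H`, where `F : N₀(V) → H`,
`(V ⊕ F)(v + n) = V v + F n` for `v ∈ D(V)`, `n ∈ N₀(V)`. -/
def dsum (V : ClosedIsometry H) (F : ↥V.N0 →L[ℂ] H) : H →L[ℂ] H :=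
  V.map.toContinuousLinearMap.comp (orthogonalProjection V.dom) +
    F.comp (orthogonalProjection V.N0)

end ClosedIsometry

/-- The continuous linear map underlying a unitary operator (linear isometric equivalence). -/
def uCLM {K : Type*} [NormedAddCommGroup K] [InnerProductSpace ℂ K] [CompleteSpace K]
    (U : K ≃ₗᵢ[ℂ] K) : K →L[ℂ] K :=
  U.toLinearIsometry.toContinuousLinearMap

/-- `U(z) = (E + zU)(E − zU)^{-1}` for a bounded operator `U`. -/
def moebius {K : Type*} [NormedAddCommGroup K] [InnerProductSpace ℂ K] [CompleteSpace K]
    (z : ℂ) (W : K →L[ℂ] K) : K →L[ℂ] K :=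
  (1 + z • W) * Ring.inverse (1 - z • W)

/-- A Hilbert space containing (an isometric copy of) `H`. -/
structure HilbertExt (H : Type*) [NormedAddCommGroup H] [InnerProductSpace ℂ H]
    [CompleteSpace H] where
  car : Type
  [ng : NormedAddCommGroup car]
  [ip : InnerProductSpace ℂ car]
  [cs : CompleteSpace car]
  emb : H →ₗᵢ[ℂ] car

attribute [instance] HilbertExt.ng HilbertExt.ip HilbertExt.cs

/-- A self-adjoint operator in a Hilbert space `K`, encoded together with its resolvent
family: a densely defined symmetric operator such that `B − λ` is boundedly invertible
for every non-real `λ`. -/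
structure SAOp (K : Type*) [NormedAddCommGroup K] [InnerProductSpace ℂ K]
    [CompleteSpace K] where
  op : K →ₗ.[ℂ] K
  dense_dom : Dense (op.domain : Set K)
  symm : ∀ x y : op.domain, ⟪op x, (y : K)⟫_ℂ = ⟪(x : K), op y⟫_ℂ
  res : ℂ → (K →L[ℂ] K)
  mem_res : ∀ (l : ℂ), l.im ≠ 0 → ∀ x : K, res l x ∈ op.domain
  res_right : ∀ (l : ℂ) (hl : l.im ≠ 0) (x : K),
    op ⟨res l x, mem_res l hl x⟩ - l • res l x = x
  res_left : ∀ (l : ℂ) (_ : l.im ≠ 0) (x : op.domain), res l (op x - l • (x : K)) = (x : K)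

/-- `(E + λB)(B − λE)^{-1} x` for a self-adjoint operator `B`. -/
def SAOp.cay {K : Type*} [NormedAddCommGroup K] [InnerProductSpace ℂ K] [CompleteSpace K]
    (B : SAOp K) {l : ℂ} (hl : l.im ≠ 0) (x : K) : K :=
  B.res l x + l • B.op ⟨B.res l x, B.mem_res l hl x⟩

/-- `B ⊇ A` along the isometric embedding `ι`. -/
def ExtendsAlong {H K : Type*} [NormedAddCommGroup H] [InnerProductSpace ℂ H] [CompleteSpace H]
    [NormedAddCommGroup K] [InnerProductSpace ℂ K] [CompleteSpace K]
    (ι : H →ₗᵢ[ℂ] K) (A : H →ₗ.[ℂ] H) (B : K →ₗ.[ℂ] K) : Prop :=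
  ∀ x : A.domain, ∃ hx : ι x ∈ B.domain, B ⟨ι x, hx⟩ = ι (A x)

/-- `R` is a generalized resolvent of the pair of symmetric operators `A₁, A₂`:
it is the compression to `H` of `(E+λ₁B₁)(B₁−λ₁)⁻¹(E+λ₂B₂)(B₂−λ₂)⁻¹` for some commuting
self-adjoint extensions `B₁ ⊇ A₁`, `B₂ ⊇ A₂` in a Hilbert space containing `H`
(normalized by `0` at real points). -/
def IsGenResolventPair {H : Type*} [NormedAddCommGroup H] [InnerProductSpace ℂ H]
    [CompleteSpace H] (A₁ A₂ : H →ₗ.[ℂ] H) (R : ℂ → ℂ → (H →L[ℂ] H)) : Prop :=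
  (∀ l₁ l₂ : ℂ, l₁.im = 0 ∨ l₂.im = 0 → R l₁ l₂ = 0) ∧
  ∃ (e : HilbertExt H) (B₁ B₂ : SAOp e.car),
    ExtendsAlong e.emb A₁ B₁.op ∧ ExtendsAlong e.emb A₂ B₂.op ∧
    (∀ l m : ℂ, l.im ≠ 0 → m.im ≠ 0 → B₁.res l * B₂.res m = B₂.res m * B₁.res l) ∧
    ∀ (l₁ l₂ : ℂ) (h₁ : l₁.im ≠ 0) (h₂ : l₂.im ≠ 0) (x y : H),
      ⟪y, R l₁ l₂ x⟫_ℂ = ⟪e.emb y, B₁.cay h₁ (B₂.cay h₂ (e.emb x))⟫_ℂ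

/-- `U` is a unitary extension of the closed isometric operator `V` along `ι`. -/
def ExtendsIso {H K : Type*} [NormedAddCommGroup H] [InnerProductSpace ℂ H] [CompleteSpace H]
    [NormedAddCommGroup K] [InnerProductSpace ℂ K] [CompleteSpace K]
    (ι : H →ₗᵢ[ℂ] K) (V : ClosedIsometry H) (U : K ≃ₗᵢ[ℂ] K) : Prop :=
  ∀ x : V.dom, U (ι x) = ι (V.map x)

/-- `V = (A+i)(A−i)^{-1}` is the Cayley transform of the symmetric operator `A`,
equivalently `A = i(V+E)(V−E)^{-1}` (graph characterization). -/
def IsCayleyOf {H : Type*} [NormedAddCommGroup H] [InnerProductSpace ℂ H] [CompleteSpace H]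
    (V : ClosedIsometry H) (A : H →ₗ.[ℂ] H) : Prop :=
  ∀ u w : H, (∃ hu : u ∈ V.dom, V.map ⟨u, hu⟩ = w) ↔
    ∃ x : A.domain, A x - Complex.I • (x : H) = u ∧ A x + Complex.I • (x : H) = w

/-- The Cayley transforms `V₁, V₂` commute whenever possible. -/
def CommuteWherePossible {H : Type*} [NormedAddCommGroup H] [InnerProductSpace ℂ H]
    [CompleteSpace H] (V₁ V₂ : ClosedIsometry H) : Prop :=
  ∀ (h : H) (h₁ : h ∈ V₁.dom) (h₂ : h ∈ V₂.dom)
    (h₁₂ : V₂.map ⟨h, h₂⟩ ∈ V₁.dom) (h₂₁ : V₁.map ⟨h, h₁⟩ ∈ V₂.dom),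
    V₁.map ⟨V₂.map ⟨h, h₂⟩, h₁₂⟩ = V₂.map ⟨V₁.map ⟨h, h₁⟩, h₂₁⟩

/-- The filter `λ → ∞` inside the sector `ℂ_+^ε = {λ : ε < arg λ < π − ε}`. -/
def sectorFilter (ε : ℝ) : Filter ℂ :=
  Filter.comap (‖·‖) Filter.atTop ⊓ 𝓟 {l : ℂ | ε < l.arg ∧ l.arg < Real.pi - ε}

/-- The function `λ ↦ F(λ)` (defined on `ℂ₊`) with values in contractions from
`N₀(V) = N_i(A)` to `H` is admissible with respect to the symmetric operator `A`:
whenever `ψ ∈ N_i(A)`, `φ ∈ N_{−i}(A)` with `ψ − φ ∈ D(A)` (i.e. `X_i ψ = φ`),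
`F(λ)ψ → φ` inside some sector and `|λ|(‖ψ‖ − ‖F(λ)ψ‖)` has finite lower limit there,
it follows that `ψ = 0`. -/
def AdmissibleFor {H : Type*} [NormedAddCommGroup H] [InnerProductSpace ℂ H] [CompleteSpace H]
    (A : H →ₗ.[ℂ] H) (V : ClosedIsometry H)
    (F : ℂ → (↥V.N0 →L[ℂ] H)) : Prop :=
  ∀ (ψ : ↥V.N0) (φ : H), φ ∈ V.Ninf → (ψ : H) - φ ∈ A.domain →
    (∃ ε : ℝ, 0 < ε ∧ ε < Real.pi / 2 ∧
      Tendsto (fun l => F l ψ) (sectorFilter ε) (𝓝 φ) ∧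
      ∃ C : ℝ, ∃ᶠ l in sectorFilter ε, ‖l‖ * (‖(ψ : H)‖ - ‖F l ψ‖) ≤ C) →
    (ψ : H) = 0

/-- The class `S(𝔻; N₀(V), N_∞(V))`: analytic on the unit disc, contraction valued,
mapping `N₀(V)` into `N_∞(V)`. -/
def InClassS {H : Type*} [NormedAddCommGroup H] [InnerProductSpace ℂ H] [CompleteSpace H]
    (V : ClosedIsometry H) (Φ : ℂ → (↥V.N0 →L[ℂ] H)) : Prop :=
  DifferentiableOn ℂ Φ (Metric.ball 0 1) ∧
  (∀ z ∈ Metric.ball (0 : ℂ) 1, ‖Φ z‖ ≤ 1) ∧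
  ∀ z ∈ Metric.ball (0 : ℂ) 1, ∀ n : ↥V.N0, Φ z n ∈ V.Ninf

open MeasureTheory in
/-- A non-negative Borel measure `μ` on `ℝ²` is a solution of the moment problem with
moments `s`. -/
def IsMomentSolution (s : ℕ → ℕ → ℝ) (μ : MeasureTheory.Measure (ℝ × ℝ)) : Prop :=
  (∀ m n : ℕ, MeasureTheory.Integrable (fun t : ℝ × ℝ => t.1 ^ m * t.2 ^ n) μ) ∧
  ∀ m n : ℕ, ∫ t : ℝ × ℝ, t.1 ^ m * t.2 ^ n ∂μ = s m n

/-- The kernel `((1+λ₁t₁)(1+λ₂t₂))/((t₁−λ₁)(t₂−λ₂))`. -/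
def momKernel (l₁ l₂ : ℂ) (t : ℝ × ℝ) : ℂ :=
  ((1 + l₁ * (t.1 : ℂ)) * (1 + l₂ * (t.2 : ℂ))) /
    (((t.1 : ℂ) - l₁) * ((t.2 : ℂ) - l₂))

/-- The shift corresponding to multiplication by `t₁` on coefficient families. -/
def sh1 : ((ℕ × ℕ) →₀ ℂ) →ₗ[ℂ] ((ℕ × ℕ) →₀ ℂ) :=
  Finsupp.lmapDomain ℂ ℂ (fun p => (p.1 + 1, p.2))

/-- The shift corresponding to multiplication by `t₂` on coefficient families. -/
def sh2 : ((ℕ × ℕ) →₀ ℂ) →ₗ[ℂ] ((ℕ × ℕ) →₀ ℂ) :=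
  Finsupp.lmapDomain ℂ ℂ (fun p => (p.1, p.2 + 1))

/-- The Carleman-type condition (1.2). -/
def CarlemanCond (s : ℕ → ℕ → ℝ) : Prop :=
  ∀ m : ℕ, ¬ Summable (fun k : ℕ =>
    (s (2 * m) (2 * (k + 1)) + s (2 * m + 2) (2 * (k + 1))) ^
      (-(1 : ℝ) / (2 * ((k : ℝ) + 1))))

/-- Positive semi-definiteness of the two-dimensional moment sequence. -/
def IsPosSemidef (s : ℕ → ℕ → ℝ) : Prop :=
  ∀ α : (ℕ × ℕ) →₀ ℂ,
    0 ≤ ∑ p ∈ α.support, ∑ q ∈ α.support,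
      α p * (starRingEnd ℂ) (α q) * (s (p.1 + q.1) (p.2 + q.2) : ℂ)

end

noncomputable section

open Complex Submodule
open scoped InnerProductSpace

section Helpers

variable {H K K₁ K₂ : Type*}
  [NormedAddCommGroup H] [InnerProductSpace ℂ H]
  [NormedAddCommGroup K] [InnerProductSpace ℂ K]
  [NormedAddCommGroup K₁] [InnerProductSpace ℂ K₁]
  [NormedAddCommGroup K₂] [InnerProductSpace ℂ K₂]

lemma uCLM_pow_apply [CompleteSpace K] (U : K ≃ₗᵢ[ℂ] K) (n : ℕ) (v : K) : (uCLM U ^ n) v = (U ^ n) v := by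
  induction n generalizing v with
  | zero => simp
  | succ n ih =>
    rw [pow_succ, pow_succ, mul_apply_eq_comp, ih]
    rfl

/-- The moments `⟪y, Uⁿ x⟫`, `n ≥ 0`, are the Taylor coefficients at `z = 0` of the compressed
resolvent. -/
lemma hasFPowerSeriesAt_resolvent [CompleteSpace K] (U : K ≃ₗᵢ[ℂ] K) (x y : K) :
    HasFPowerSeriesAt (fun z : ℂ => ⟪y, Ring.inverse (1 - z • uCLM U) x⟫_ℂ)
      (fun n => ContinuousMultilinearMap.mkPiRing ℂ (Fin n) ⟪y, (U ^ n) x⟫_ℂ) 0 := by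
  let g : (K →L[ℂ] K) →L[ℂ] ℂ := (innerSL ℂ y).comp (ContinuousLinearMap.apply ℂ K x)
  have hg : HasFPowerSeriesAt (fun z : ℂ => g (Ring.inverse (1 - z • uCLM U))) _ 0 :=
    ⟨_, g.comp_hasFPowerSeriesOnBall
      (spectrum.hasFPowerSeriesOnBall_inverse_one_sub_smul ℂ (uCLM U))⟩
  have hp : (fun n => ContinuousMultilinearMap.mkPiRing ℂ (Fin n) ⟪y, (U ^ n) x⟫_ℂ) =
      g.compFormalMultilinearSeries
        fun n => ContinuousMultilinearMap.mkPiRing ℂ (Fin n) (uCLM U ^ n) := by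
    funext n
    ext
    change _ = g (ContinuousMultilinearMap.mkPiRing ℂ (Fin n) (uCLM U ^ n) fun _ => 1)
    simp [g, ← uCLM_pow_apply]
  rw [hp]
  exact hg

lemma moment_pow_eq [CompleteSpace K₁] [CompleteSpace K₂] {ι₁ : H →ₗᵢ[ℂ] K₁} {ι₂ : H →ₗᵢ[ℂ] K₂}
    {G₁ : K₁ ≃ₗᵢ[ℂ] K₁} {G₂ : K₂ ≃ₗᵢ[ℂ] K₂}
    (hres : ∀ z : ℂ, ‖z‖ ≠ 1 → ∀ x y : H,
      ⟪ι₁ y, Ring.inverse (1 - z • uCLM G₁) (ι₁ x)⟫_ℂ =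
        ⟪ι₂ y, Ring.inverse (1 - z • uCLM G₂) (ι₂ x)⟫_ℂ) (n : ℕ) (x y : H) :
    ⟪ι₁ y, (G₁ ^ n) (ι₁ x)⟫_ℂ = ⟪ι₂ y, (G₂ ^ n) (ι₂ x)⟫_ℂ := by
  have heq := (hasFPowerSeriesAt_resolvent G₁ (ι₁ x) (ι₁ y)).eq_formalMultilinearSeries_of_eventually
    (hasFPowerSeriesAt_resolvent G₂ (ι₂ x) (ι₂ y)) (by
      filter_upwards [Metric.ball_mem_nhds (0 : ℂ) one_pos] with z hz
      exact hres z (mem_ball_zero_iff.1 hz).ne x y)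
  simpa using congrArg (fun p => p n fun _ => (1 : ℂ)) heq

lemma inner_zpow_zpow (U : K ≃ₗᵢ[ℂ] K) (j k : ℤ) (u v : K) :
    ⟪(U ^ j) u, (U ^ k) v⟫_ℂ = ⟪u, (U ^ (k - j)) v⟫_ℂ := by
  have h : (U ^ k) v = (U ^ j) ((U ^ (k - j)) v) := by
    rw [← Function.comp_apply (f := U ^ j), ← LinearIsometryEquiv.coe_mul, ← zpow_add,
      add_sub_cancel]
  rw [h, LinearIsometryEquiv.inner_map_map]

/-- Nonnegative moments determine the negative ones, because `⟪y, U⁻ⁿ x⟫` is the complex conjugate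
of `⟪x, Uⁿ y⟫`; hence the Gram matrices of the two families of translates coincide. -/
lemma gram_eq {ι₁ : H →ₗᵢ[ℂ] K₁} {ι₂ : H →ₗᵢ[ℂ] K₂}
    {G₁ : K₁ ≃ₗᵢ[ℂ] K₁} {G₂ : K₂ ≃ₗᵢ[ℂ] K₂}
    (hmom : ∀ (n : ℕ) (x y : H), ⟪ι₁ y, (G₁ ^ n) (ι₁ x)⟫_ℂ = ⟪ι₂ y, (G₂ ^ n) (ι₂ x)⟫_ℂ)
    (p q : ℤ × H) :
    ⟪(G₁ ^ p.1) (ι₁ p.2), (G₁ ^ q.1) (ι₁ q.2)⟫_ℂ =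
      ⟪(G₂ ^ p.1) (ι₂ p.2), (G₂ ^ q.1) (ι₂ q.2)⟫_ℂ := by
  rcases le_total p.1 q.1 with h | h
  · obtain ⟨n, hn⟩ := Int.eq_ofNat_of_zero_le (sub_nonneg.2 h)
    rw [inner_zpow_zpow, inner_zpow_zpow, hn, zpow_natCast, zpow_natCast, hmom]
  · obtain ⟨n, hn⟩ := Int.eq_ofNat_of_zero_le (sub_nonneg.2 h)
    rw [← inner_conj_symm, inner_zpow_zpow, ← inner_conj_symm ((G₂ ^ p.1) _), inner_zpow_zpow, hn,
      zpow_natCast, zpow_natCast, hmom]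

lemma norm_linearCombination_eq {I : Type*} {a : I → K₁} {b : I → K₂}
    (hab : ∀ i j, ⟪a i, a j⟫_ℂ = ⟪b i, b j⟫_ℂ) (c : I →₀ ℂ) :
    ‖Finsupp.linearCombination ℂ b c‖ = ‖Finsupp.linearCombination ℂ a c‖ := by
  have h : ⟪Finsupp.linearCombination ℂ b c, Finsupp.linearCombination ℂ b c⟫_ℂ =
      ⟪Finsupp.linearCombination ℂ a c, Finsupp.linearCombination ℂ a c⟫_ℂ := by
    simp only [Finsupp.linearCombination_apply, Finsupp.sum_inner, Finsupp.inner_sum,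
      inner_smul_left, inner_smul_right, hab]
  rw [@norm_eq_sqrt_re_inner ℂ, @norm_eq_sqrt_re_inner ℂ, h]

/-- The synthesis map of the translates of `H`: the basis vector at `(k, x)` goes to `Uᵏ (ι x)`. -/
def translates (ι : H →ₗᵢ[ℂ] K) (U : K ≃ₗᵢ[ℂ] K) : (ℤ × H →₀ ℂ) →ₗ[ℂ] K :=
  Finsupp.linearCombination ℂ fun p : ℤ × H => (U ^ p.1) (ι p.2)

lemma denseRange_translates {ι : H →ₗᵢ[ℂ] K} {U : K ≃ₗᵢ[ℂ] K}
    (hmin : (Submodule.span ℂ (⋃ k : ℤ, ⇑(U ^ k) '' Set.range ι)).topologicalClosure = ⊤) :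
    DenseRange (translates ι U) := by
  have hset : (⋃ k : ℤ, ⇑(U ^ k) '' Set.range ι) =
      Set.range fun p : ℤ × H => (U ^ p.1) (ι p.2) := by
    ext v
    simp
  rw [hset, ← Finsupp.range_linearCombination] at hmin
  exact Submodule.dense_iff_topologicalClosure_eq_top.2 hmin

/-- `U` acts on the translates as the shift `(k, x) ↦ (k + 1, x)`. -/
lemma translates_shift (ι : H →ₗᵢ[ℂ] K) (U : K ≃ₗᵢ[ℂ] K) (c : ℤ × H →₀ ℂ) :
    U (translates ι U c) =
      translates ι U (Finsupp.lmapDomain ℂ ℂ (fun p : ℤ × H => (1 + p.1, p.2)) c) := by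
  induction c using Finsupp.induction_linear with
  | zero => simp
  | add f g hf hg => simp only [map_add, hf, hg]
  | single p a =>
    simp [translates, Finsupp.mapDomain_single, zpow_one_add]

end Helpers

/-- Two minimal unitary extensions `G₁, G₂` of a closed isometric operator `V`
in a separable complex Hilbert space `H`, which produce the same generalized resolvent
`P_H (E − z G_j)^{-1}|_H` (`|z| ≠ 1`), are unitarily equivalent by a unitary `K` mapping
`ℋ₁` onto `ℋ₂` with `G₂ = K G₁ K^{-1}` and `K|_H = E_H`. -/
theorem statement1 {H K₁ K₂ : Type*}
    [NormedAddCommGroup H] [InnerProductSpace ℂ H] [CompleteSpace H]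
    [TopologicalSpace.SeparableSpace H]
    [NormedAddCommGroup K₁] [InnerProductSpace ℂ K₁] [CompleteSpace K₁]
    [NormedAddCommGroup K₂] [InnerProductSpace ℂ K₂] [CompleteSpace K₂]
    (V : ClosedIsometry H)
    (ι₁ : H →ₗᵢ[ℂ] K₁) (ι₂ : H →ₗᵢ[ℂ] K₂)
    (G₁ : K₁ ≃ₗᵢ[ℂ] K₁) (G₂ : K₂ ≃ₗᵢ[ℂ] K₂)
    (hext₁ : ∀ x : V.dom, G₁ (ι₁ x) = ι₁ (V.map x))
    (hext₂ : ∀ x : V.dom, G₂ (ι₂ x) = ι₂ (V.map x))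
    (hmin₁ : (Submodule.span ℂ (⋃ k : ℤ, ⇑(G₁ ^ k) '' Set.range ι₁)).topologicalClosure = ⊤)
    (hmin₂ : (Submodule.span ℂ (⋃ k : ℤ, ⇑(G₂ ^ k) '' Set.range ι₂)).topologicalClosure = ⊤)
    (hres : ∀ z : ℂ, ‖z‖ ≠ 1 → ∀ x y : H,
      ⟪ι₁ y, Ring.inverse (1 - z • uCLM G₁) (ι₁ x)⟫_ℂ =
        ⟪ι₂ y, Ring.inverse (1 - z • uCLM G₂) (ι₂ x)⟫_ℂ) :
    ∃ Kmap : K₁ ≃ₗᵢ[ℂ] K₂,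
      (∀ x : H, Kmap (ι₁ x) = ι₂ x) ∧
      (∀ v : K₁, Kmap (G₁ v) = G₂ (Kmap v)) := by
  have hnorm : ∀ c, ‖translates ι₂ G₂ (LinearEquiv.refl ℂ _ c)‖ = ‖translates ι₁ G₁ c‖ :=
    norm_linearCombination_eq (gram_eq (moment_pow_eq hres))
  have hd₁ := denseRange_translates hmin₁
  let Kmap : K₁ ≃ₗᵢ[ℂ] K₂ := (LinearEquiv.refl ℂ (ℤ × H →₀ ℂ)).extendOfIsometry
    (translates ι₁ G₁) (translates ι₂ G₂) hd₁ (denseRange_translates hmin₂) hnorm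
  have hK : ∀ c, Kmap (translates ι₁ G₁ c) = translates ι₂ G₂ c :=
    LinearEquiv.extendOfIsometry_eq _ _ _ _ _ hnorm
  refine ⟨Kmap, fun x => ?_, fun v => ?_⟩
  · simpa [translates] using hK (Finsupp.single (0, x) 1)
  · refine hd₁.induction_on v (isClosed_eq ?_ ?_) fun c => ?_
    · exact Kmap.continuous.comp G₁.continuous
    · exact G₂.continuous.comp Kmap.continuous
    · rw [translates_shift, hK, hK, translates_shift]

end
end

section
/- Let A_1, A_2 be closed (not necessarily densely defined) symmetric operators in a separable Hilbert space H whose Cayley transforms V_j = (A_j + iE)(A_j − iE)^{−1} commute whenever possible: V_1 V_2 h = V_2 V_1 h for all h ∈ D(V_1 V_2) ∩ D(V_2 V_1). Suppose there exists a generalized resolvent of the pair A_1, A_2. Then the relation R_{u; (λ_1−i)/(λ_1+i), (λ_2−i)/(λ_2+i)}(V_1, V_2) = − R_{s; λ_1, λ_2}(A_1, A_2), for λ_1, λ_2 ∈ ℂ∖(ℝ ∪ {±i}), establishes a one-to-one correspondence between the set of all generalized resolvents R_{s;λ_1,λ_2}(A_1,A_2) of the pair A_1, A_2 and the set of those generalized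 resolvents R_{u;z_1,z_2}(V_1,V_2) of the pair of closed isometric operators V_1, V_2 which are generated by commuting unitary extensions of V_1, V_2 having no nonzero fixed elements. -/
noncomputable section

open Complex
open scoped InnerProductSpace

/-- A generalized resolvent of the pair of closed isometric operators `V₁, V₂` which is
generated by commuting unitary extensions of `V₁, V₂` having no nonzero fixed elements
(normalized by `0` at points with `|z_j| = 1`). -/
def IsGenResolventPairIsoNoFixed {H : Type} [NormedAddCommGroup H] [InnerProductSpace ℂ H]
    [CompleteSpace H] (V₁ V₂ : ClosedIsometry H) (R : ℂ → ℂ → (H →L[ℂ] H)) : Prop :=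
  (∀ z₁ z₂ : ℂ, ‖z₁‖ = 1 ∨ ‖z₂‖ = 1 → R z₁ z₂ = 0) ∧
  ∃ (e : HilbertExt H) (U₁ U₂ : e.car ≃ₗᵢ[ℂ] e.car),
    ExtendsIso e.emb V₁ U₁ ∧ ExtendsIso e.emb V₂ U₂ ∧
    (∀ x : e.car, U₁ (U₂ x) = U₂ (U₁ x)) ∧
    (∀ x : e.car, U₁ x = x → x = 0) ∧ (∀ x : e.car, U₂ x = x → x = 0) ∧
    ∀ (z₁ z₂ : ℂ), ‖z₁‖ ≠ 1 → ‖z₂‖ ≠ 1 → ∀ x y : H,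
      ⟪y, R z₁ z₂ x⟫_ℂ =
        ⟪e.emb y, (moebius z₁ (uCLM U₁) * moebius z₂ (uCLM U₂)) (e.emb x)⟫_ℂ

/-- The relation `R_{u;(λ₁−i)/(λ₁+i),(λ₂−i)/(λ₂+i)}(V₁,V₂) = −R_{s;λ₁,λ₂}(A₁,A₂)`. -/
def PairResolventRel {H : Type} [NormedAddCommGroup H] [InnerProductSpace ℂ H]
    [CompleteSpace H] (Rs Ru : ℂ → ℂ → (H →L[ℂ] H)) : Prop :=
  ∀ l₁ l₂ : ℂ, l₁.im ≠ 0 → l₂.im ≠ 0 →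
    l₁ ≠ Complex.I → l₁ ≠ -Complex.I → l₂ ≠ Complex.I → l₂ ≠ -Complex.I →
    Ru ((l₁ - Complex.I) / (l₁ + Complex.I)) ((l₂ - Complex.I) / (l₂ + Complex.I)) =
      -(Rs l₁ l₂)

open Filter Topology

section Helpers

variable {K : Type*} [NormedAddCommGroup K] [InnerProductSpace ℂ K] [CompleteSpace K]

/-! ### Scalar facts about the Cayley transform of the spectral parameter -/

lemma norm_sub_I_ne {l : ℂ} (hl : l.im ≠ 0) : ‖l - I‖ ≠ ‖l + I‖ := by
  intro h
  have h2 : Complex.normSq (l - I) = Complex.normSq (l + I) := by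
    rw [Complex.normSq_eq_norm_sq, Complex.normSq_eq_norm_sq, h]
  simp only [Complex.normSq_apply, sub_re, sub_im, add_re, add_im, I_re, I_im] at h2
  apply hl
  linarith

lemma norm_cayley_ne_one {l : ℂ} (hl : l.im ≠ 0) : ‖(l - I) / (l + I)‖ ≠ 1 := by
  intro h
  rw [norm_div] at h
  have h0 : ‖l + I‖ ≠ 0 := by
    intro h0
    rw [h0] at h
    simp at h
  exact norm_sub_I_ne hl ((div_eq_one_iff_eq h0).1 h)

/-- Every `z ≠ 0` off the unit circle is the image of an admissible spectral parameter. -/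
lemma exists_cayley_param {z : ℂ} (hz : ‖z‖ ≠ 1) (hz0 : z ≠ 0) :
    ∃ l : ℂ, l.im ≠ 0 ∧ l ≠ I ∧ l ≠ -I ∧ (l - I) / (l + I) = z := by
  have h1 : 1 - z ≠ 0 := by
    intro h
    apply hz
    rw [← sub_eq_zero.1 h, norm_one]
  have key : (I * (1 + z) / (1 - z) - I) / (I * (1 + z) / (1 - z) + I) = z := by
    have e1 : I * (1 + z) / (1 - z) - I = 2 * I * z / (1 - z) := by
      field_simp; ring
    have e2 : I * (1 + z) / (1 - z) + I = 2 * I / (1 - z) := by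
      field_simp; ring
    rw [e1, e2]
    have := I_ne_zero
    field_simp
  refine ⟨I * (1 + z) / (1 - z), ?_, ?_, ?_, key⟩
  · generalize I * (1 + z) / (1 - z) = l at key
    intro him
    apply hz
    have hn : ‖l - I‖ = ‖l + I‖ := by
      have h2 : Complex.normSq (l - I) = Complex.normSq (l + I) := by
        simp only [Complex.normSq_apply, sub_re, sub_im, add_re, add_im, I_re, I_im, him]
        ring
      rw [Complex.normSq_eq_norm_sq, Complex.normSq_eq_norm_sq] at h2
      exact (sq_eq_sq₀ (norm_nonneg _) (norm_nonneg _)).1 h2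
    rw [← key, norm_div, hn, div_self]
    intro h0
    have h3 : l + I = 0 := norm_eq_zero.1 h0
    have := congrArg Complex.im h3
    simp [him] at this
  · intro h
    rw [h] at key
    simp at key
    exact hz0 key.symm
  · intro h
    rw [h] at key
    simp at key
    exact hz0 key.symm

/-! ### Linear pencils of a unitary operator -/

lemma uCLM_apply (U : K ≃ₗᵢ[ℂ] K) (x : K) : uCLM U x = U x := rfl

lemma norm_uCLM_le (U : K ≃ₗᵢ[ℂ] K) : ‖uCLM U‖ ≤ 1 :=
  ContinuousLinearMap.opNorm_le_bound _ zero_le_one (fun x => by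
    rw [uCLM_apply, LinearIsometryEquiv.norm_map, one_mul])

lemma isUnit_one_add_smul (U : K ≃ₗᵢ[ℂ] K) {c : ℂ} (hc : ‖c‖ < 1) :
    IsUnit (1 + c • uCLM U) := by
  have h : ‖-(c • uCLM U)‖ < 1 := by
    rw [norm_neg, norm_smul]
    calc ‖c‖ * ‖uCLM U‖ ≤ ‖c‖ * 1 :=
          mul_le_mul_of_nonneg_left (norm_uCLM_le U) (norm_nonneg _)
      _ < 1 := by simpa using hc
  have := isUnit_one_sub_of_norm_lt_one h
  rwa [sub_neg_eq_add] at this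

lemma isUnit_uCLM (U : K ≃ₗᵢ[ℂ] K) : IsUnit (uCLM U) :=
  ⟨⟨uCLM U, uCLM U.symm, by ext x; simp [uCLM_apply], by ext x; simp [uCLM_apply]⟩, rfl⟩

/-- The spectrum of a unitary operator lies on the unit circle. -/
lemma isUnit_pencil (U : K ≃ₗᵢ[ℂ] K) {a b : ℂ} (hab : ‖a‖ ≠ ‖b‖) :
    IsUnit (a • uCLM U + b • (1 : K →L[ℂ] K)) := by
  have hs : ∀ c : ℂ, c ≠ 0 → IsUnit (c • (1 : K →L[ℂ] K)) := fun c hc =>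
    ⟨⟨c • 1, c⁻¹ • 1, by simp [smul_smul, hc], by simp [smul_smul, hc]⟩, rfl⟩
  rcases lt_or_gt_of_ne hab with h | h
  · have hb : b ≠ 0 := by
      rintro rfl
      simp at h
      exact absurd h (not_lt.2 (norm_nonneg _))
    have hc : ‖a / b‖ < 1 := by
      rw [norm_div, div_lt_one (norm_pos_iff.2 hb)]
      exact h
    have := (hs b hb).mul (isUnit_one_add_smul U hc)
    convert this using 1
    ext x
    simp [smul_smul, mul_div_cancel₀ _ hb, add_comm, smul_add]
  · have ha : a ≠ 0 := by
      rintro rfl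
      simp at h
      exact absurd h (not_lt.2 (norm_nonneg _))
    have hc : ‖b / a‖ < 1 := by
      rw [norm_div, div_lt_one (norm_pos_iff.2 ha)]
      exact h
    have := ((hs a ha).mul (isUnit_uCLM U)).mul (isUnit_one_add_smul U.symm hc)
    convert this using 1
    ext x
    simp [uCLM_apply, smul_smul, mul_div_cancel₀ _ ha, smul_add]

lemma isUnit_one_sub_smul (U : K ≃ₗᵢ[ℂ] K) {z : ℂ} (hz : ‖z‖ ≠ 1) :
    IsUnit (1 - z • uCLM U) := by
  have := isUnit_pencil U (a := -z) (b := 1) (by simpa using hz)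
  convert this using 1
  rw [neg_smul, one_smul]; abel

lemma continuousAt_moebius (U : K ≃ₗᵢ[ℂ] K) {z : ℂ} (hz : ‖z‖ ≠ 1) :
    ContinuousAt (fun w => moebius w (uCLM U)) z := by
  obtain ⟨u, hu⟩ := isUnit_one_sub_smul U hz
  have h1 : ContinuousAt (Ring.inverse : (K →L[ℂ] K) → _) (1 - z • uCLM U) := by
    rw [← hu]; exact NormedRing.inverse_continuousAt u
  have h2 : ContinuousAt (fun w : ℂ => Ring.inverse (1 - w • uCLM U)) z :=
    ContinuousAt.comp (f := fun w : ℂ => 1 - w • uCLM U) h1 (by fun_prop)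
  unfold moebius
  exact ContinuousAt.mul (by fun_prop) h2

/-! ### Resolvents of a self-adjoint operator -/

/-- The bounded operator `(E + λB)(B − λE)⁻¹ = λE + (1 + λ²)(B − λE)⁻¹`. -/
def cayCLM (B : SAOp K) (l : ℂ) : K →L[ℂ] K := l • 1 + (1 + l * l) • B.res l

lemma SAOp.op_res (B : SAOp K) {l : ℂ} (hl : l.im ≠ 0) (x : K) :
    B.op ⟨B.res l x, B.mem_res l hl x⟩ = x + l • B.res l x :=
  sub_eq_iff_eq_add.1 (B.res_right l hl x)

lemma cay_eq (B : SAOp K) {l : ℂ} (hl : l.im ≠ 0) (x : K) : B.cay hl x = cayCLM B l x := by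
  unfold SAOp.cay cayCLM
  rw [B.op_res hl]
  simp
  module

/-- The resolvent identity. -/
lemma res_identity (B : SAOp K) {l m : ℂ} (hl : l.im ≠ 0) (hm : m.im ≠ 0) :
    B.res l * (1 - (l - m) • B.res m) = B.res m := by
  ext x
  have h := B.res_left l hl ⟨B.res m x, B.mem_res m hm x⟩
  rw [B.op_res hm] at h
  have e : (1 - (l - m) • B.res m : K →L[ℂ] K) x = x + m • B.res m x - l • B.res m x := by
    simp
    module
  rw [mul_apply_eq_comp, e, h]

lemma isOpen_im_ne : IsOpen {l : ℂ | l.im ≠ 0} :=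
  isOpen_ne_fun Complex.continuous_im continuous_const

lemma isOpen_norm_ne : IsOpen {z : ℂ | ‖z‖ ≠ 1} :=
  isOpen_ne_fun continuous_norm continuous_const

lemma continuousAt_res (B : SAOp K) {m : ℂ} (hm : m.im ≠ 0) : ContinuousAt B.res m := by
  have h0 : (1 - (m - m) • B.res m : K →L[ℂ] K) = ((1 : (K →L[ℂ] K)ˣ) : K →L[ℂ] K) := by simp
  have hlin : ContinuousAt (fun l : ℂ => (1 - (l - m) • B.res m : K →L[ℂ] K)) m := by fun_prop
  have h1 : ContinuousAt (fun l : ℂ => Ring.inverse (1 - (l - m) • B.res m : K →L[ℂ] K)) m := by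
    have h2 : ContinuousAt (Ring.inverse : (K →L[ℂ] K) → (K →L[ℂ] K)) (1 - (m - m) • B.res m) := by
      rw [h0]
      exact NormedRing.inverse_continuousAt 1
    exact ContinuousAt.comp (f := fun l : ℂ => (1 - (l - m) • B.res m : K →L[ℂ] K)) h2 hlin
  have h2 : ContinuousAt
      (fun l : ℂ => B.res m * Ring.inverse (1 - (l - m) • B.res m : K →L[ℂ] K)) m :=
    continuousAt_const.mul h1
  have hunit : ∀ᶠ l in 𝓝 m, IsUnit (1 - (l - m) • B.res m : K →L[ℂ] K) := by
    have ho : {W : K →L[ℂ] K | IsUnit W} ∈ 𝓝 (1 - (m - m) • B.res m : K →L[ℂ] K) := by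
      rw [h0]
      exact Units.isOpen.mem_nhds ⟨1, rfl⟩
    exact hlin.eventually ho
  refine h2.congr ?_
  filter_upwards [hunit, isOpen_im_ne.mem_nhds hm] with l hu hl
  conv_lhs => rw [← res_identity B hl hm]
  rw [mul_assoc, res_identity B hl hm, Ring.mul_inverse_cancel _ hu, mul_one]

lemma continuousAt_cayCLM (B : SAOp K) {m : ℂ} (hm : m.im ≠ 0) : ContinuousAt (cayCLM B) m := by
  have := continuousAt_res B hm
  unfold cayCLM
  fun_prop

lemma res_injective (B : SAOp K) {l : ℂ} (hl : l.im ≠ 0) {x : K} (h : B.res l x = 0) : x = 0 := by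
  have h1 := B.op_res hl x
  have h2 : (⟨B.res l x, B.mem_res l hl x⟩ : B.op.domain) = 0 := Subtype.ext h
  rw [h2, LinearPMap.map_zero, h, smul_zero, add_zero] at h1
  exact h1.symm

/-! ### The Cayley transform of a self-adjoint operator -/

/-- `U` is the Cayley transform `(B + i)(B − i)⁻¹ = E + 2i (B − i)⁻¹` of `B`. -/
def IsCay (B : SAOp K) (U : K ≃ₗᵢ[ℂ] K) : Prop := ∀ x, U x = x + (2 * I) • B.res I x

lemma I_im_ne : (I : ℂ).im ≠ 0 := by simp

lemma two_I_ne : (2 * I : ℂ) ≠ 0 := by simp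

/-- For real `t` and `u = (t+i)/(t-i)`, `z = (λ-i)/(λ+i)`, one has
`(1+zu)/(1-zu) = -i (1+λt)/(t-λ)`; this is the operator version. -/
lemma moebius_eq {B : SAOp K} {U : K ≃ₗᵢ[ℂ] K} (h : IsCay B U) {l : ℂ} (hl : l.im ≠ 0)
    (hlI : l ≠ -I) : moebius ((l - I) / (l + I)) (uCLM U) = (-I) • cayCLM B l := by
  have hu := isUnit_one_sub_smul U (norm_cayley_ne_one hl)
  have hne : l + I ≠ 0 := fun h0 => hlI (eq_neg_of_add_eq_zero_left h0)
  have key : ((-I) • cayCLM B l) * (1 - ((l - I) / (l + I)) • uCLM U) =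
      1 + ((l - I) / (l + I)) • uCLM U := by
    ext x
    set r := B.res I x with hr
    have h1 := B.res_left l hl ⟨r, B.mem_res I I_im_ne x⟩
    rw [B.op_res I_im_ne] at h1
    have e1 : (1 - ((l - I) / (l + I)) • uCLM U) x =
        (2 * I / (l + I)) • (x + I • r - l • r) := by
      simp only [_root_.sub_apply, one_apply_eq_self,
        _root_.smul_apply, uCLM_apply, h x, ← hr]
      match_scalars <;> field_simp <;> ring
    have e2 : B.res l (x + I • r - l • r) = r := h1
    have e3 : cayCLM B l (x + I • r - l • r) = l • x + (1 + l * I) • r := by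
      simp only [cayCLM, _root_.add_apply, _root_.smul_apply,
        one_apply_eq_self, e2]
      module
    rw [mul_apply_eq_comp, e1, map_smul, _root_.smul_apply, e3]
    simp only [_root_.add_apply, one_apply_eq_self,
        _root_.smul_apply, uCLM_apply, h x, ← hr]
    match_scalars <;> field_simp <;> ring_nf <;> simp [I_sq]
  unfold moebius
  rw [← key, mul_assoc, Ring.mul_inverse_cancel _ hu, mul_one]

/-- Every self-adjoint operator has a unitary Cayley transform. -/
lemma exists_cayley (B : SAOp K) : ∃ U : K ≃ₗᵢ[ℂ] K, IsCay B U := by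
  have hnI : (-I : ℂ).im ≠ 0 := by simp
  let L : K →ₗ[ℂ] K := ((1 : K →L[ℂ] K) + (2 * I) • B.res I : K →L[ℂ] K)
  have hL : ∀ x, L x = x + (2 * I) • B.res I x := fun x => rfl
  have hnorm : ∀ x, ‖L x‖ = ‖x‖ := by
    intro x
    rw [hL]
    have hop := B.op_res I_im_ne x
    have hs := B.symm ⟨B.res I x, B.mem_res I I_im_ne x⟩ ⟨B.res I x, B.mem_res I I_im_ne x⟩
    rw [hop] at hs
    set d := B.res I x
    have hs : ⟪x + I • d, d⟫_ℂ = ⟪d, x + I • d⟫_ℂ := hs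
    have e : ⟪x + (2 * I) • d, x + (2 * I) • d⟫_ℂ = ⟪x, x⟫_ℂ := by
      simp only [inner_add_left, inner_add_right, inner_smul_left, inner_smul_right, map_mul,
        conj_I, map_ofNat] at hs ⊢
      linear_combination (2 * I) * hs
    have e2 : RCLike.re ⟪x + (2 * I) • d, x + (2 * I) • d⟫_ℂ = RCLike.re ⟪x, x⟫_ℂ := by rw [e]
    rw [inner_self_eq_norm_sq, inner_self_eq_norm_sq] at e2
    exact (sq_eq_sq₀ (norm_nonneg _) (norm_nonneg _)).1 e2
  let Li : K →ₗᵢ[ℂ] K := ⟨L, hnorm⟩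
  have hsurj : Function.Surjective Li := by
    intro y
    refine ⟨y - (2 * I) • B.res (-I) y, ?_⟩
    change L _ = y
    have h1 := B.res_left I I_im_ne ⟨B.res (-I) y, B.mem_res (-I) hnI y⟩
    rw [B.op_res hnI] at h1
    have e : y + -I • B.res (-I) y - I • B.res (-I) y = y - (2 * I) • B.res (-I) y := by module
    rw [hL, ← e, h1]
    module
  exact ⟨LinearIsometryEquiv.ofSurjective Li hsurj, fun x => rfl⟩

lemma IsCay.noFixed {B : SAOp K} {U : K ≃ₗᵢ[ℂ] K} (h : IsCay B U) (x : K) (hx : U x = x) :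
    x = 0 := by
  rw [h x, add_eq_left] at hx
  exact res_injective B I_im_ne ((smul_eq_zero.1 hx).resolve_left two_I_ne)

/-- The inverse Cayley transform `B = i(U + E)(U − E)⁻¹`, defined on the range of `U − E`;
its domain is dense because `ker (U* − E) = ker (U − E) = 0`. -/
lemma exists_saop (U : K ≃ₗᵢ[ℂ] K) (hU : ∀ x, U x = x → x = 0) :
    ∃ B : SAOp K, IsCay B U ∧ ∀ l : ℂ, B.res l =
      (uCLM U - 1) * Ring.inverse ((I - l) • uCLM U + (I + l) • (1 : K →L[ℂ] K)) := by
  let T : K →ₗ[ℂ] K := (uCLM U - 1 : K →L[ℂ] K)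
  have hT : ∀ x, T x = U x - x := fun x => rfl
  have hinj : Function.Injective T := by
    rw [← LinearMap.ker_eq_bot, LinearMap.ker_eq_bot']
    intro x hx
    exact hU x (sub_eq_zero.1 hx)
  let S : K →ₗ[ℂ] K := (I • (uCLM U + 1) : K →L[ℂ] K)
  have hS : ∀ x, S x = I • (U x + x) := fun x => rfl
  let op : K →ₗ.[ℂ] K :=
    ⟨LinearMap.range T, S ∘ₗ ((LinearEquiv.ofInjective T hinj).symm : _ →ₗ[ℂ] K)⟩
  have hop : ∀ (d : op.domain) (y : K), T y = d → op d = I • (U y + y) := by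
    intro d y hy
    have : (LinearEquiv.ofInjective T hinj).symm d = y := by
      rw [LinearEquiv.symm_apply_eq]
      exact Subtype.ext hy.symm
    change S ((LinearEquiv.ofInjective T hinj).symm d) = _
    rw [this, hS]
  have hunit : ∀ l : ℂ, l.im ≠ 0 →
      IsUnit ((I - l) • uCLM U + (I + l) • (1 : K →L[ℂ] K)) := by
    intro l hl
    apply isUnit_pencil
    rw [norm_sub_rev, add_comm]
    exact norm_sub_I_ne hl
  let R : ℂ → (K →L[ℂ] K) := fun l =>
    (uCLM U - 1) * Ring.inverse ((I - l) • uCLM U + (I + l) • (1 : K →L[ℂ] K))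
  have hR : ∀ l x, R l x =
      T (Ring.inverse ((I - l) • uCLM U + (I + l) • (1 : K →L[ℂ] K)) x) := fun _ _ => rfl
  have hmem : ∀ l x, R l x ∈ op.domain := fun l x => ⟨_, (hR l x).symm⟩
  have hleft : ∀ l : ℂ, l.im ≠ 0 → ∀ x : op.domain, R l (op x - l • (x : K)) = (x : K) := by
    rintro l hl ⟨_, y, rfl⟩
    rw [hop _ y rfl]
    have e : I • (U y + y) - l • T y =
        ((I - l) • uCLM U + (I + l) • (1 : K →L[ℂ] K)) y := by
      rw [hT]
      simp [uCLM_apply]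
      module
    change R l (I • (U y + y) - l • T y) = T y
    rw [e, hR, ← mul_apply_eq_comp, Ring.inverse_mul_cancel _ (hunit l hl)]
    rfl
  refine ⟨⟨op, ?_, ?_, R, fun l _ => hmem l, ?_, hleft⟩, ?_, fun l => rfl⟩
  · change Dense (LinearMap.range T : Set K)
    rw [Submodule.dense_iff_topologicalClosure_eq_top, Submodule.topologicalClosure_eq_top_iff,
      Submodule.eq_bot_iff]
    intro x hx
    rw [Submodule.mem_orthogonal] at hx
    -- Orthogonality of `x` to `U x - x` and unitarity give `‖U x - x‖² = 0`.
    apply hU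
    rw [← sub_eq_zero, ← @inner_self_eq_zero ℂ]
    have h1 : ∀ y, ⟪U y, x⟫_ℂ = ⟪y, x⟫_ℂ := by
      intro y
      have := hx (T y) ⟨y, rfl⟩
      rwa [hT, inner_sub_left, sub_eq_zero] at this
    have h2 : ⟪U x, x⟫_ℂ = ⟪x, x⟫_ℂ := h1 x
    have h3 : ⟪x, U x⟫_ℂ = ⟪x, x⟫_ℂ := by
      rw [← inner_conj_symm, h2, inner_conj_symm]
    rw [inner_sub_left, inner_sub_right, inner_sub_right, LinearIsometryEquiv.inner_map_map,
      h2, h3]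
    ring
  · rintro ⟨_, y, rfl⟩ ⟨_, w, rfl⟩
    rw [hop _ y rfl, hop _ w rfl]
    change ⟪I • (U y + y), T w⟫_ℂ = ⟪T y, I • (U w + w)⟫_ℂ
    rw [hT, hT]
    simp only [inner_add_left, inner_sub_left, inner_add_right, inner_sub_right, inner_smul_left,
      inner_smul_right, LinearIsometryEquiv.inner_map_map, conj_I]
    ring
  · intro l hl x
    set y := Ring.inverse ((I - l) • uCLM U + (I + l) • (1 : K →L[ℂ] K)) x with hy
    rw [hop _ y rfl]
    have e : I • (U y + y) - l • T y =
        ((I - l) • uCLM U + (I + l) • (1 : K →L[ℂ] K)) y := by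
      rw [hT]
      simp [uCLM_apply]
      module
    change I • (U y + y) - l • T y = x
    rw [e, hy, ← mul_apply_eq_comp, Ring.mul_inverse_cancel _ (hunit l hl)]
    rfl
  · intro x
    change U x = x + (2 * I) • R I x
    have h1 := hleft I I_im_ne ⟨T x, x, rfl⟩
    rw [hop _ x rfl] at h1
    have e : I • (U x + x) - I • T x = (2 * I) • x := by rw [hT]; module
    change R I (I • (U x + x) - I • T x) = T x at h1
    rw [e, map_smul, hT] at h1
    rw [h1]
    abel

/-! ### Extensions and their Cayley transforms -/

section Ext

variable {H : Type*} [NormedAddCommGroup H] [InnerProductSpace ℂ H] [CompleteSpace H]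

lemma extendsIso_of_extendsAlong {ι : H →ₗᵢ[ℂ] K} {A : H →ₗ.[ℂ] H} {V : ClosedIsometry H}
    (hV : IsCayleyOf V A) {B : SAOp K} {U : K ≃ₗᵢ[ℂ] K} (h : IsCay B U)
    (hB : ExtendsAlong ι A B.op) : ExtendsIso ι V U := by
  intro u
  obtain ⟨x, h1, h2⟩ := (hV u (V.map u)).1 ⟨u.2, rfl⟩
  obtain ⟨hx, hBx⟩ := hB x
  have h3 := B.res_left I I_im_ne ⟨ι x, hx⟩
  rw [hBx] at h3
  have e : ι (A x) - I • ι x = ι u := by rw [← h1, map_sub, map_smul]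
  change B.res I (ι (A x) - I • ι x) = ι x at h3
  rw [e] at h3
  rw [h, h3, ← h2, ← h1, map_add, map_sub, map_smul]
  module

lemma extendsAlong_of_extendsIso {ι : H →ₗᵢ[ℂ] K} {A : H →ₗ.[ℂ] H} {V : ClosedIsometry H}
    (hV : IsCayleyOf V A) {B : SAOp K} {U : K ≃ₗᵢ[ℂ] K} (h : IsCay B U)
    (hU : ExtendsIso ι V U) : ExtendsAlong ι A B.op := by
  intro x
  obtain ⟨hu, hw⟩ := (hV (A x - I • (x : H)) (A x + I • (x : H))).2 ⟨x, rfl, rfl⟩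
  have h1 := hU ⟨_, hu⟩
  rw [hw, h] at h1
  have h2 : (2 * I) • B.res I (ι (A x - I • (x : H))) = (2 * I) • ι x := by
    rw [eq_sub_of_add_eq' h1]
    simp only [map_add, map_sub, map_smul]
    module
  have h3 : B.res I (ι (A x - I • (x : H))) = ι x := smul_right_injective K two_I_ne h2
  have hmem : ι x ∈ B.op.domain := h3 ▸ B.mem_res I I_im_ne _
  refine ⟨hmem, ?_⟩
  have h4 := B.op_res I_im_ne (ι (A x - I • (x : H)))
  have e : (⟨ι x, hmem⟩ : B.op.domain) =
      ⟨B.res I (ι (A x - I • (x : H))), B.mem_res I I_im_ne _⟩ := Subtype.ext h3.symm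
  rw [e, h4, h3, map_sub, map_smul]
  abel

/-- The compression of a bounded operator along an isometric embedding. -/
def compress (ι : H →ₗᵢ[ℂ] K) (T : K →L[ℂ] K) : H →L[ℂ] H :=
  (ContinuousLinearMap.adjoint ι.toContinuousLinearMap) ∘L T ∘L ι.toContinuousLinearMap

lemma inner_compress (ι : H →ₗᵢ[ℂ] K) (T : K →L[ℂ] K) (x y : H) :
    ⟪y, compress ι T x⟫_ℂ = ⟪ι y, T (ι x)⟫_ℂ := by
  simp [compress, ContinuousLinearMap.adjoint_inner_right]

lemma compress_neg (ι : H →ₗᵢ[ℂ] K) (T : K →L[ℂ] K) :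
    compress ι (-T) = -compress ι T := by
  simp [compress]

lemma eq_compress {ι : H →ₗᵢ[ℂ] K} {T : K →L[ℂ] K} {R : H →L[ℂ] H}
    (h : ∀ x y : H, ⟪y, R x⟫_ℂ = ⟪ι y, T (ι x)⟫_ℂ) : R = compress ι T := by
  ext x
  refine ext_inner_left ℂ fun y => ?_
  rw [h, inner_compress]

lemma continuous_compress (ι : H →ₗᵢ[ℂ] K) :
    Continuous (compress ι : (K →L[ℂ] K) → (H →L[ℂ] H)) := by
  unfold compress
  fun_prop

end Ext

lemma moebius_mul_eq {B₁ B₂ : SAOp K} {U₁ U₂ : K ≃ₗᵢ[ℂ] K} (h₁ : IsCay B₁ U₁)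
    (h₂ : IsCay B₂ U₂) {l₁ l₂ : ℂ} (hl₁ : l₁.im ≠ 0) (hl₂ : l₂.im ≠ 0) (hl₁I : l₁ ≠ -I)
    (hl₂I : l₂ ≠ -I) :
    moebius ((l₁ - I) / (l₁ + I)) (uCLM U₁) * moebius ((l₂ - I) / (l₂ + I)) (uCLM U₂) =
      -(cayCLM B₁ l₁ * cayCLM B₂ l₂) := by
  rw [moebius_eq h₁ hl₁ hl₁I, moebius_eq h₂ hl₂ hl₂I, smul_mul_smul_comm]
  simp

/-! ### Uniqueness by continuation to the exceptional parameters -/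

lemma eq_of_continuousAt_of_finite {X : Type*} [TopologicalSpace X] [T2Space X] {f g : ℂ → X}
    {Ω S : Set ℂ} (hΩ : IsOpen Ω) (hS : S.Finite) {a : ℂ} (ha : a ∈ Ω)
    (hf : ContinuousAt f a) (hg : ContinuousAt g a) (h : ∀ z ∈ Ω, z ∉ S → f z = g z) :
    f a = g a := by
  have hev : ∀ᶠ z in 𝓝[≠] a, f z = g z := by
    have h1 : ∀ᶠ z in 𝓝[≠] a, z ∈ Ω := mem_nhdsWithin_of_mem_nhds (hΩ.mem_nhds ha)
    have h2 : ∀ᶠ z in 𝓝 a, z ∉ S \ {a} :=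
      (hS.subset Set.sdiff_subset).isClosed.isOpen_compl.mem_nhds (by simp)
    filter_upwards [h1, mem_nhdsWithin_of_mem_nhds h2, self_mem_nhdsWithin] with z hz1 hz2 hz3
    exact h z hz1 fun hz => hz2 ⟨hz, hz3⟩
  exact tendsto_nhds_unique_of_eventuallyEq (hf.tendsto.mono_left nhdsWithin_le_nhds)
    (hg.tendsto.mono_left nhdsWithin_le_nhds) hev

/-- Two separately continuous functions on `Ω × Ω` that agree off finitely many values of each
variable are equal. -/
lemma eq_of_separately_continuous {X : Type*} [TopologicalSpace X] [T2Space X]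
    {F G : ℂ → ℂ → X} {Ω S : Set ℂ} (hΩ : IsOpen Ω) (hS : S.Finite)
    (hF₁ : ∀ a ∈ Ω, ∀ b ∈ Ω, ContinuousAt (fun z => F z b) a)
    (hF₂ : ∀ a ∈ Ω, ∀ b ∈ Ω, ContinuousAt (fun z => F a z) b)
    (hG₁ : ∀ a ∈ Ω, ∀ b ∈ Ω, ContinuousAt (fun z => G z b) a)
    (hG₂ : ∀ a ∈ Ω, ∀ b ∈ Ω, ContinuousAt (fun z => G a z) b)
    (h : ∀ a ∈ Ω, a ∉ S → ∀ b ∈ Ω, b ∉ S → F a b = G a b) :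
    ∀ a ∈ Ω, ∀ b ∈ Ω, F a b = G a b := by
  intro a ha b hb
  refine eq_of_continuousAt_of_finite hΩ hS hb (hF₂ a ha b hb) (hG₂ a ha b hb) ?_
  intro c hc hcS
  exact eq_of_continuousAt_of_finite (f := fun z => F z c) (g := fun z => G z c) hΩ hS ha
    (hF₁ a ha c hc) (hG₁ a ha c hc)
    fun z hz hzS => h z hz hzS c hc hcS

section Cont

variable {H : Type} [NormedAddCommGroup H] [InnerProductSpace ℂ H] [CompleteSpace H]

lemma IsGenResolventPair.continuity_props {A₁ A₂ : H →ₗ.[ℂ] H} {R : ℂ → ℂ → (H →L[ℂ] H)}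
    (h : IsGenResolventPair A₁ A₂ R) :
    (∀ a ∈ {l : ℂ | l.im ≠ 0}, ∀ b ∈ {l : ℂ | l.im ≠ 0}, ContinuousAt (fun z => R z b) a) ∧
    (∀ a ∈ {l : ℂ | l.im ≠ 0}, ∀ b ∈ {l : ℂ | l.im ≠ 0}, ContinuousAt (fun z => R a z) b) := by
  obtain ⟨-, e, B₁, B₂, -, -, -, hR⟩ := h
  have hR' : ∀ l₁ l₂ : ℂ, l₁.im ≠ 0 → l₂.im ≠ 0 →
      R l₁ l₂ = compress e.emb (cayCLM B₁ l₁ * cayCLM B₂ l₂) := fun l₁ l₂ h₁ h₂ =>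
    eq_compress fun x y => by
      rw [hR l₁ l₂ h₁ h₂, cay_eq, cay_eq, mul_apply_eq_comp]
  constructor
  · intro a ha b hb
    have h1 : ContinuousAt (fun l => compress e.emb (cayCLM B₁ l * cayCLM B₂ b)) a :=
      (continuous_compress e.emb).continuousAt.comp
        ((continuousAt_cayCLM B₁ ha).mul continuousAt_const)
    refine h1.congr ?_
    filter_upwards [isOpen_im_ne.mem_nhds ha] with l hl
    exact (hR' l b hl hb).symm
  · intro a ha b hb
    have h1 : ContinuousAt (fun l => compress e.emb (cayCLM B₁ a * cayCLM B₂ l)) b :=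
      (continuous_compress e.emb).continuousAt.comp
        (continuousAt_const.mul (continuousAt_cayCLM B₂ hb))
    refine h1.congr ?_
    filter_upwards [isOpen_im_ne.mem_nhds hb] with l hl
    exact (hR' a l ha hl).symm

lemma IsGenResolventPairIsoNoFixed.continuity_props {V₁ V₂ : ClosedIsometry H}
    {R : ℂ → ℂ → (H →L[ℂ] H)} (h : IsGenResolventPairIsoNoFixed V₁ V₂ R) :
    (∀ a ∈ {z : ℂ | ‖z‖ ≠ 1}, ∀ b ∈ {z : ℂ | ‖z‖ ≠ 1}, ContinuousAt (fun z => R z b) a) ∧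
    (∀ a ∈ {z : ℂ | ‖z‖ ≠ 1}, ∀ b ∈ {z : ℂ | ‖z‖ ≠ 1}, ContinuousAt (fun z => R a z) b) := by
  obtain ⟨-, e, U₁, U₂, -, -, -, -, -, hR⟩ := h
  have hR' : ∀ z₁ z₂ : ℂ, ‖z₁‖ ≠ 1 → ‖z₂‖ ≠ 1 →
      R z₁ z₂ = compress e.emb (moebius z₁ (uCLM U₁) * moebius z₂ (uCLM U₂)) :=
    fun z₁ z₂ h₁ h₂ => eq_compress (hR z₁ z₂ h₁ h₂)
  constructor
  · intro a ha b hb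
    have h1 : ContinuousAt
        (fun z => compress e.emb (moebius z (uCLM U₁) * moebius b (uCLM U₂))) a :=
      (continuous_compress e.emb).continuousAt.comp
        ((continuousAt_moebius U₁ ha).mul continuousAt_const)
    refine h1.congr ?_
    filter_upwards [isOpen_norm_ne.mem_nhds ha] with z hz
    exact (hR' z b hz hb).symm
  · intro a ha b hb
    have h1 : ContinuousAt
        (fun z => compress e.emb (moebius a (uCLM U₁) * moebius z (uCLM U₂))) b :=
      (continuous_compress e.emb).continuousAt.comp
        (continuousAt_const.mul (continuousAt_moebius U₂ hb))
    refine h1.congr ?_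
    filter_upwards [isOpen_norm_ne.mem_nhds hb] with z hz
    exact (hR' a z ha hz).symm

lemma unique_Ru {V₁ V₂ : ClosedIsometry H} {Rs R R' : ℂ → ℂ → (H →L[ℂ] H)}
    (h : IsGenResolventPairIsoNoFixed V₁ V₂ R) (h' : IsGenResolventPairIsoNoFixed V₁ V₂ R')
    (hr : PairResolventRel Rs R) (hr' : PairResolventRel Rs R') : R = R' := by
  have key := eq_of_separately_continuous isOpen_norm_ne (Set.finite_singleton (0 : ℂ))
    h.continuity_props.1 h.continuity_props.2 h'.continuity_props.1 h'.continuity_props.2 (by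
      intro a ha ha0 b hb hb0
      obtain ⟨l, hl, hl1, hl2, rfl⟩ := exists_cayley_param ha ha0
      obtain ⟨m, hm, hm1, hm2, rfl⟩ := exists_cayley_param hb hb0
      rw [hr l m hl hm hl1 hl2 hm1 hm2, hr' l m hl hm hl1 hl2 hm1 hm2])
  funext a b
  by_cases hab : ‖a‖ = 1 ∨ ‖b‖ = 1
  · rw [h.1 a b hab, h'.1 a b hab]
  · rw [not_or] at hab
    exact key a hab.1 b hab.2

lemma unique_Rs {A₁ A₂ : H →ₗ.[ℂ] H} {Ru R R' : ℂ → ℂ → (H →L[ℂ] H)}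
    (h : IsGenResolventPair A₁ A₂ R) (h' : IsGenResolventPair A₁ A₂ R')
    (hr : PairResolventRel R Ru) (hr' : PairResolventRel R' Ru) : R = R' := by
  have key := eq_of_separately_continuous isOpen_im_ne (Set.toFinite ({I, -I} : Set ℂ))
    h.continuity_props.1 h.continuity_props.2 h'.continuity_props.1 h'.continuity_props.2 (by
      intro a ha haS b hb hbS
      simp only [Set.mem_insert_iff, Set.mem_singleton_iff, not_or] at haS hbS
      have h1 := hr a b ha hb haS.1 haS.2 hbS.1 hbS.2
      rw [hr' a b ha hb haS.1 haS.2 hbS.1 hbS.2] at h1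
      exact (neg_injective h1).symm)
  funext a b
  by_cases hab : a.im = 0 ∨ b.im = 0
  · rw [h.1 a b hab, h'.1 a b hab]
  · rw [not_or] at hab
    exact key a hab.1 b hab.2

/-! ### Existence of the corresponding generalized resolvent -/

open Classical in
lemma exists_Ru {A₁ A₂ : H →ₗ.[ℂ] H} {V₁ V₂ : ClosedIsometry H} (hV₁ : IsCayleyOf V₁ A₁)
    (hV₂ : IsCayleyOf V₂ A₂) {Rs : ℂ → ℂ → (H →L[ℂ] H)} (h : IsGenResolventPair A₁ A₂ Rs) :
    ∃ Ru, IsGenResolventPairIsoNoFixed V₁ V₂ Ru ∧ PairResolventRel Rs Ru := by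
  obtain ⟨-, e, B₁, B₂, hB₁, hB₂, hc, hR⟩ := h
  obtain ⟨U₁, hU₁⟩ := exists_cayley B₁
  obtain ⟨U₂, hU₂⟩ := exists_cayley B₂
  refine ⟨fun z₁ z₂ => if ‖z₁‖ = 1 ∨ ‖z₂‖ = 1 then 0 else
    compress e.emb (moebius z₁ (uCLM U₁) * moebius z₂ (uCLM U₂)),
    ⟨fun z₁ z₂ hz => if_pos hz, e, U₁, U₂, extendsIso_of_extendsAlong hV₁ hU₁ hB₁,
      extendsIso_of_extendsAlong hV₂ hU₂ hB₂, ?_, hU₁.noFixed, hU₂.noFixed, ?_⟩, ?_⟩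
  · intro x
    have h1 : B₁.res I (B₂.res I x) = B₂.res I (B₁.res I x) :=
      DFunLike.congr_fun (hc I I I_im_ne I_im_ne) x
    rw [hU₁, hU₂, hU₂ (U₁ x), hU₁ x]
    simp only [map_add, map_smul, h1]
    module
  · intro z₁ z₂ h₁ h₂ x y
    simp only [h₁, h₂, or_self, if_false]
    rw [inner_compress]
  · intro l₁ l₂ h₁ h₂ _ h₁I _ h₂I
    simp only [norm_cayley_ne_one h₁, norm_cayley_ne_one h₂, or_self, if_false]
    rw [moebius_mul_eq hU₁ hU₂ h₁ h₂ h₁I h₂I, compress_neg]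
    congr 1
    refine (eq_compress fun x y => ?_).symm
    rw [hR l₁ l₂ h₁ h₂, cay_eq, cay_eq, mul_apply_eq_comp]

open Classical in
lemma exists_Rs {A₁ A₂ : H →ₗ.[ℂ] H} {V₁ V₂ : ClosedIsometry H} (hV₁ : IsCayleyOf V₁ A₁)
    (hV₂ : IsCayleyOf V₂ A₂) {Ru : ℂ → ℂ → (H →L[ℂ] H)}
    (h : IsGenResolventPairIsoNoFixed V₁ V₂ Ru) :
    ∃ Rs, IsGenResolventPair A₁ A₂ Rs ∧ PairResolventRel Rs Ru := by
  obtain ⟨-, e, U₁, U₂, hE₁, hE₂, hc, hn₁, hn₂, hR⟩ := h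
  obtain ⟨B₁, hB₁, hr₁⟩ := exists_saop U₁ hn₁
  obtain ⟨B₂, hB₂, hr₂⟩ := exists_saop U₂ hn₂
  refine ⟨fun l₁ l₂ => if l₁.im = 0 ∨ l₂.im = 0 then 0 else
    compress e.emb (cayCLM B₁ l₁ * cayCLM B₂ l₂),
    ⟨fun l₁ l₂ hl => if_pos hl, e, B₁, B₂, extendsAlong_of_extendsIso hV₁ hB₁ hE₁,
      extendsAlong_of_extendsIso hV₂ hB₂ hE₂, ?_, ?_⟩, ?_⟩
  · intro l m _ _
    have hUU : Commute (uCLM U₁) (uCLM U₂) := ContinuousLinearMap.ext hc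
    have hinv : ∀ {W T : e.car →L[ℂ] e.car}, Commute W T → Commute W (Ring.inverse T) := by
      intro W T hWT
      by_cases hT : IsUnit T
      · obtain ⟨u, rfl⟩ := hT
        rw [Ring.inverse_unit]
        exact hWT.units_inv_right
      · rw [Ring.inverse_non_unit _ hT]
        exact Commute.zero_right W
    have hpen : ∀ {W : e.car →L[ℂ] e.car} {T : e.car →L[ℂ] e.car} (a b : ℂ), Commute W T →
        Commute W (Ring.inverse (a • T + b • (1 : e.car →L[ℂ] e.car))) := fun a b hWT =>
      hinv ((hWT.smul_right a).add_right ((Commute.one_right _).smul_right b))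
    have hres : ∀ {W T : e.car →L[ℂ] e.car} (k : ℂ), Commute W T →
        Commute W ((T - 1) * Ring.inverse ((I - k) • T + (I + k) • (1 : e.car →L[ℂ] e.car))) :=
      fun k hWT => (hWT.sub_right (Commute.one_right _)).mul_right (hpen _ _ hWT)
    have h1 : Commute (uCLM U₁) (B₂.res m) := by
      rw [hr₂]; exact hres m hUU
    have h2 : Commute (B₂.res m) (B₁.res l) := by
      rw [hr₁]; exact hres l h1.symm
    exact h2.symm
  · intro l₁ l₂ h₁ h₂ x y
    simp only [h₁, h₂, or_self, if_false]
    rw [inner_compress, cay_eq, cay_eq, mul_apply_eq_comp]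
  · intro l₁ l₂ h₁ h₂ _ h₁I _ h₂I
    simp only [h₁, h₂, or_self, if_false]
    rw [← compress_neg, ← moebius_mul_eq hB₁ hB₂ h₁ h₂ h₁I h₂I]
    exact eq_compress (hR _ _ (norm_cayley_ne_one h₁) (norm_cayley_ne_one h₂))

end Cont

end Helpers

/-- Let `A₁, A₂` be closed symmetric operators in a separable Hilbert space
`H` whose Cayley transforms `V₁, V₂` commute whenever possible, and suppose a generalized
resolvent of the pair `A₁, A₂` exists.  Then the relation above establishes a one-to-one
correspondence between all generalized resolvents of the pair `A₁, A₂` and those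
generalized resolvents of the pair `V₁, V₂` generated by commuting unitary extensions
without nonzero fixed elements. -/
theorem statement4 {H : Type} [NormedAddCommGroup H] [InnerProductSpace ℂ H] [CompleteSpace H]
    [TopologicalSpace.SeparableSpace H]
    (A₁ A₂ : H →ₗ.[ℂ] H)
    (hA₁closed : IsClosed (A₁.graph : Set (H × H)))
    (hA₂closed : IsClosed (A₂.graph : Set (H × H)))
    (hA₁symm : ∀ x y : A₁.domain, ⟪A₁ x, (y : H)⟫_ℂ = ⟪(x : H), A₁ y⟫_ℂ)
    (hA₂symm : ∀ x y : A₂.domain, ⟪A₂ x, (y : H)⟫_ℂ = ⟪(x : H), A₂ y⟫_ℂ)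
    (V₁ V₂ : ClosedIsometry H)
    (hV₁ : IsCayleyOf V₁ A₁) (hV₂ : IsCayleyOf V₂ A₂)
    (hcomm : CommuteWherePossible V₁ V₂)
    (hex : ∃ R, IsGenResolventPair A₁ A₂ R) :
    (∀ Rs, IsGenResolventPair A₁ A₂ Rs →
      ∃! Ru, IsGenResolventPairIsoNoFixed V₁ V₂ Ru ∧ PairResolventRel Rs Ru) ∧
    (∀ Ru, IsGenResolventPairIsoNoFixed V₁ V₂ Ru →
      ∃! Rs, IsGenResolventPair A₁ A₂ Rs ∧ PairResolventRel Rs Ru) := by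
  refine ⟨fun Rs hRs => ?_, fun Ru hRu => ?_⟩
  · obtain ⟨Ru, h1, h2⟩ := exists_Ru hV₁ hV₂ hRs
    exact ⟨Ru, ⟨h1, h2⟩, fun R' h' => unique_Ru h'.1 h1 h'.2 h2⟩
  · obtain ⟨Rs, h1, h2⟩ := exists_Rs hV₁ hV₂ hRu
    exact ⟨Rs, ⟨h1, h2⟩, fun R' h' => unique_Rs h'.1 h1 h'.2 h2⟩

end
end
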